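/- arXiv:1912.13430 — 7 statements merged into one kernel-verified Lean document; each statement's English description precedes it below -/
import Mathlib

section
/- Let S, X, and Y be finite nonempty types, T : S → X → Y → S, idx : S → ℕ, and k ∈ ℕ. Define the k-capped Bellman backup operator B_k on functions V : S → ℕ by B_k(V)(s) = min(k, max over x ∈ X of max(idx(s), min over y ∈ Y of V(T(s,x,y)))). Define V₀(s) = min(k, idx(s)) and V_{n+1} = B_k(V_n). Then: (1) the sequence (V_n) is pointwise nondecreasing in n; (2) V_N is a fixed point of B_k for N = k · |S|; and (3) V_N is the least fixed point of B_k, i.e., V_N(s) ≤ W(s) for every s ∈ S and every W : S → ℕ with B_k(W) = W. -/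
/-- The `k`-capped Bellman backup operator for a two-player safety game:
`B_k(V)(s) = min(k, max_{x ∈ X} max(idx s, min_{y ∈ Y} V (T s x y)))`. -/
noncomputable def cappedBellman {S X Y : Type*} [Fintype X] [Fintype Y]
    [Nonempty X] [Nonempty Y]
    (T : S → X → Y → S) (idx : S → ℕ) (k : ℕ) (V : S → ℕ) (s : S) : ℕ :=
  min k (Finset.univ.sup' Finset.univ_nonempty fun x : X =>
    max (idx s) (Finset.univ.inf' Finset.univ_nonempty fun y : Y => V (T s x y)))

theorem cappedBellman_mono_aux {S X Y : Type*} [Fintype X] [Fintype Y]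
    [Nonempty X] [Nonempty Y]
    (T : S → X → Y → S) (idx : S → ℕ) (k : ℕ) (V W : S → ℕ) (h : ∀ s, V s ≤ W s) (s : S) :
    cappedBellman T idx k V s ≤ cappedBellman T idx k W s := by
  unfold cappedBellman
  refine min_le_min le_rfl (Finset.sup'_mono_fun fun x _ => max_le_max le_rfl ?_)
  exact Finset.inf'_mono_fun fun y _ => h _

theorem cappedBellman_base_aux {S X Y : Type*} [Fintype X] [Fintype Y]
    [Nonempty X] [Nonempty Y]
    (T : S → X → Y → S) (idx : S → ℕ) (k : ℕ) (V : S → ℕ) (s : S) :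
    min k (idx s) ≤ cappedBellman T idx k V s := by
  unfold cappedBellman
  refine min_le_min le_rfl ?_
  obtain ⟨x⟩ := ‹Nonempty X›
  exact (le_max_left _ _).trans (Finset.le_sup' (fun x : X =>
    max (idx s) (Finset.univ.inf' Finset.univ_nonempty fun y : Y => V (T s x y)))
    (Finset.mem_univ x))

/-- Value iteration for the `k`-capped Bellman backup operator, started from
`V₀(s) = min(k, idx s)`, is pointwise nondecreasing, reaches a fixed point after
`k · |S|` steps, and this fixed point is the least fixed point of `B_k`. -/
theorem cappedBellman_valueIteration {S X Y : Type*}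
    [Fintype S] [Fintype X] [Fintype Y]
    [Nonempty S] [Nonempty X] [Nonempty Y]
    (T : S → X → Y → S) (idx : S → ℕ) (k : ℕ)
    (Vseq : ℕ → S → ℕ)
    (h0 : ∀ s, Vseq 0 s = min k (idx s))
    (hsucc : ∀ n, Vseq (n + 1) = cappedBellman T idx k (Vseq n)) :
    (∀ n s, Vseq n s ≤ Vseq (n + 1) s) ∧
    cappedBellman T idx k (Vseq (k * Fintype.card S)) = Vseq (k * Fintype.card S) ∧
    (∀ W : S → ℕ, cappedBellman T idx k W = W →
      ∀ s, Vseq (k * Fintype.card S) s ≤ W s) := by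
  have hmono : ∀ n s, Vseq n s ≤ Vseq (n + 1) s := by
    intro n
    induction n with
    | zero =>
      intro s
      rw [h0, hsucc]
      exact cappedBellman_base_aux T idx k _ s
    | succ n ih =>
      intro s
      rw [hsucc (n + 1)]
      conv_lhs => rw [hsucc n]
      exact cappedBellman_mono_aux T idx k _ _ ih s
  have hle : ∀ n s, Vseq n s ≤ k := by
    intro n s
    cases n with
    | zero => rw [h0]; exact min_le_left _ _
    | succ n => rw [hsucc]; exact min_le_left _ _
  refine ⟨hmono, ?_, ?_⟩
  · by_contra hne
    have hstep : ∀ n, n ≤ k * Fintype.card S → Vseq (n + 1) ≠ Vseq n := by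
      intro n hn heq
      have hall : ∀ m, Vseq (n + m) = Vseq n := by
        intro m
        induction m with
        | zero => rfl
        | succ m ih => rw [← add_assoc, hsucc, ih, ← hsucc, heq]
      apply hne
      obtain ⟨m, hm⟩ := Nat.exists_eq_add_of_le hn
      rw [hm, hall m, ← hsucc, heq]
    have hsum : ∀ n, n ≤ k * Fintype.card S + 1 → n ≤ ∑ s, Vseq n s := by
      intro n
      induction n with
      | zero => intro _; exact Nat.zero_le _
      | succ n ih =>
        intro hn
        have h1 := ih (by omega)
        have h2 : ∑ s, Vseq n s < ∑ s, Vseq (n + 1) s := by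
          obtain ⟨s, hs⟩ := Function.ne_iff.mp (hstep n (by omega))
          exact Finset.sum_lt_sum (fun s _ => hmono n s)
            ⟨s, Finset.mem_univ s, lt_of_le_of_ne (hmono n s) (Ne.symm hs)⟩
        omega
    have h3 := hsum _ le_rfl
    have h4 : ∑ s, Vseq (k * Fintype.card S + 1) s ≤ k * Fintype.card S := by
      refine (Finset.sum_le_card_nsmul Finset.univ _ k (fun s _ => hle _ s)).trans ?_
      simp [mul_comm]
    omega
  · intro W hW
    generalize k * Fintype.card S = N
    induction N with
    | zero =>
      intro s
      rw [h0, ← hW]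
      exact cappedBellman_base_aux T idx k _ s
    | succ n ih =>
      intro s
      rw [hsucc, ← hW]
      exact cappedBellman_mono_aux T idx k _ _ ih s
end

section
/- Let S be a type, X a nonempty type, Y a finite nonempty type, T : S → X → Y → S, s₁ ∈ S, and idx : S → ℕ∞. Suppose V : S → ℕ∞ satisfies the Bellman equations, i.e., for all s ∈ S, V(s) = ⨆_{x∈X} max(idx(s), min_{y∈Y} V(T(s,x,y))), and suppose V(s₁) = v with v ≠ ⊤. Let π : S → X → Y be any greedy policy, meaning V(T(s, x, π(s,x))) = min_{y∈Y} V(T(s,x,y)) for all s ∈ S and x ∈ X. Then for every infinite sequence x₁, x₂, … of elements of X, the play s^1 = s₁, s^{n+1} = T(s^n, x_n, π(s^n, x_n)) satisfies idx(s^n) ≤ v and V(s^n) ≤ v for every n ≥ 1. In particular, for every k ∈ ℕ with k > v, the memoryless policy π is winning in the safety game with losing states {s | idx(s) ≥ k}. -/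
/-- The play induced from initial state `s₁` by a one-step transition `step`
and an infinite sequence `x` of environment actions:
`play 0 = s₁`, `play (n+1) = step (play n) (x n)`. -/
def play {S X : Type*} (step : S → X → S) (s₁ : S) (x : ℕ → X) : ℕ → S
  | 0 => s₁
  | n + 1 => step (play step s₁ x n) (x n)

/-- If `V : S → ℕ∞` satisfies the Bellman equations with `V s₁ = v ≠ ⊤`, then any
greedy policy `π` keeps every state of every induced play at index (and value) at
most `v`; in particular, for every `k > v`, the memoryless policy `π` is winning in
the safety game with losing states `{s | idx s ≥ k}`. -/
theorem greedy_policy_winning {S X Y : Type*} [Nonempty X] [Fintype Y] [Nonempty Y]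
    (T : S → X → Y → S) (s₁ : S) (idx : S → ℕ∞)
    (V : S → ℕ∞)
    (hV : ∀ s : S, V s = ⨆ x : X, max (idx s) (⨅ y : Y, V (T s x y)))
    (v : ℕ∞) (hv : V s₁ = v) (hvtop : v ≠ ⊤)
    (π : S → X → Y)
    (hπ : ∀ (s : S) (x : X), V (T s x (π s x)) = ⨅ y : Y, V (T s x y))
    (x : ℕ → X) :
    (∀ n : ℕ, idx (play (fun s x' => T s x' (π s x')) s₁ x n) ≤ v ∧
        V (play (fun s x' => T s x' (π s x')) s₁ x n) ≤ v) ∧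
    (∀ k : ℕ, v < (k : ℕ∞) →
      ∀ n : ℕ, ¬ (k : ℕ∞) ≤ idx (play (fun s x' => T s x' (π s x')) s₁ x n)) := by
  have key : ∀ (s : S) (a : X), max (idx s) (⨅ y : Y, V (T s a y)) ≤ V s := by
    intro s a
    rw [hV s]
    exact le_iSup (fun a : X => max (idx s) (⨅ y : Y, V (T s a y))) a
  have hVn : ∀ n : ℕ, V (play (fun s x' => T s x' (π s x')) s₁ x n) ≤ v := by
    intro n
    induction n with
    | zero => exact hv.le
    | succ n ih =>
      refine le_trans ?_ ih
      change V (T _ _ (π _ _)) ≤ _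
      rw [hπ]
      exact (le_max_right _ _).trans (key _ _)
  have hI : ∀ n : ℕ, idx (play (fun s x' => T s x' (π s x')) s₁ x n) ≤ v := fun n =>
    ((le_max_left _ _).trans (key _ (x n))).trans (hVn n)
  exact ⟨fun n => ⟨hI n, hVn n⟩, fun k hk n h => absurd (h.trans (hI n)) (not_le.mpr hk)⟩
end

section
/- Let S be a type, X and Y finite nonempty types, T : S → X → Y → S, s₁ ∈ S, and idx : S → ℕ. Then the following are equivalent: (i) there exists V : S → ℕ∞ with V(s₁) ≠ ⊤ satisfying the Bellman equations, i.e., for all s ∈ S, V(s) = max_{x∈X} max(idx(s), min_{y∈Y} V(T(s,x,y))); (ii) there exist k ∈ ℕ and a system strategy f mapping nonempty finite sequences of elements of X to elements of Y such that for every infinite sequence x₁, x₂, … of elements of X, every state of the induced play s^1 = s₁, s^{n+1} = T(s^n, x_n, f(x₁,…,x_n)) satisfies idx(s^n) ≤ k. -/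
/-- The play induced from initial state `s₁` by a history-dependent system strategy
`f` (mapping nonempty finite sequences of environment actions to system actions) and
an infinite sequence `x` of environment actions:
`stratPlay 0 = s₁`, `stratPlay (n+1) = T (stratPlay n) (x n) (f (x 0, …, x n))`. -/
def stratPlay {S X Y : Type*} (T : S → X → Y → S) (s₁ : S)
    (f : {l : List X // l ≠ []} → Y) (x : ℕ → X) : ℕ → S
  | 0 => s₁
  | n + 1 =>
      T (stratPlay T s₁ f x n) (x n)
        (f ⟨List.ofFn fun i : Fin (n + 1) => x i, by simp⟩)

theorem stratPlay_congr_aux {S X Y : Type*} (T : S → X → Y → S) (s₁ : S)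
    (f : {l : List X // l ≠ []} → Y) (x x' : ℕ → X) (n : ℕ)
    (h : ∀ i < n, x i = x' i) : stratPlay T s₁ f x n = stratPlay T s₁ f x' n := by
  induction n with
  | zero => rfl
  | succ n ih =>
    have e : (fun i : Fin (n + 1) => x i) = fun i : Fin (n + 1) => x' i :=
      funext fun i => h i i.2
    simp only [stratPlay]
    rw [ih fun i hi => h i (by omega), h n (by omega)]
    simp only [e]

theorem stratPlay_memoryless_aux {S X Y : Type*} (T : S → X → Y → S) (s₁ : S)
    (g : S → X → Y) (x : ℕ → X) (n : ℕ) :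
    stratPlay T s₁ (fun l => g (l.1.dropLast.foldl (fun s a => T s a (g s a)) s₁)
      (l.1.getLast l.2)) x n
      = (List.ofFn fun i : Fin n => x i).foldl (fun s a => T s a (g s a)) s₁ := by
  induction n with
  | zero => simp [stratPlay]
  | succ n ih =>
    have e : (List.ofFn fun i : Fin (n + 1) => x i)
        = (List.ofFn fun i : Fin n => x i) ++ [x n] := by
      rw [List.ofFn_succ']; simp [List.concat_eq_append]
    simp only [stratPlay]
    rw [ih]
    simp only [e, List.dropLast_concat, List.getLast_concat, List.foldl_append,
      List.foldl_cons, List.foldl_nil]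

/-- The Bellman equations have a solution that is finite at the initial state iff
there exist a bound `k` and a history-dependent system strategy keeping the index of
every state of every induced play at most `k`. -/
theorem bellman_solution_iff_bounded_strategy {S X Y : Type*}
    [Fintype X] [Fintype Y] [Nonempty X] [Nonempty Y]
    (T : S → X → Y → S) (s₁ : S) (idx : S → ℕ) :
    (∃ V : S → ℕ∞, V s₁ ≠ ⊤ ∧
        ∀ s : S, V s = ⨆ x : X, max (idx s : ℕ∞) (⨅ y : Y, V (T s x y))) ↔
    (∃ (k : ℕ) (f : {l : List X // l ≠ []} → Y), ∀ x : ℕ → X, ∀ n : ℕ,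
        idx (stratPlay T s₁ f x n) ≤ k) := by
  constructor
  · rintro ⟨V, hV, hB⟩
    have hg : ∀ s x, ∃ y, V (T s x y) ≤ V s := by
      intro s x
      obtain ⟨y, hy⟩ := exists_eq_ciInf_of_finite (f := fun y => V (T s x y))
      refine ⟨y, ?_⟩
      have h1 : max (idx s : ℕ∞) (⨅ y : Y, V (T s x y)) ≤ V s := by
        rw [hB s]
        exact le_iSup (fun x => max (idx s : ℕ∞) (⨅ y : Y, V (T s x y))) x
      calc V (T s x y) = _ := hy
        _ ≤ _ := le_max_right _ _
        _ ≤ _ := h1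
    have hidx : ∀ s, (idx s : ℕ∞) ≤ V s := by
      intro s
      obtain ⟨x⟩ := ‹Nonempty X›
      rw [hB s]
      exact le_trans (le_max_left _ _)
        (le_iSup (fun x => max (idx s : ℕ∞) (⨅ y : Y, V (T s x y))) x)
    choose g hg using hg
    obtain ⟨k, hk⟩ := ENat.ne_top_iff_exists.mp hV
    refine ⟨k, fun l => g (l.1.dropLast.foldl (fun s a => T s a (g s a)) s₁)
      (l.1.getLast l.2), fun x n => ?_⟩
    rw [stratPlay_memoryless_aux]
    have key : ∀ (l : List X) (s : S), V (l.foldl (fun s a => T s a (g s a)) s) ≤ V s := by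
      intro l
      induction l with
      | nil => intro s; exact le_rfl
      | cons a l ih => intro s; exact (ih _).trans (hg s a)
    have := (hidx _).trans (key (List.ofFn fun i : Fin n => x i) s₁)
    rw [← hk] at this
    exact_mod_cast this
  · rintro ⟨k, f, hf⟩
    classical
    let Φ : (S → ℕ∞) →o (S → ℕ∞) :=
      { toFun := fun V s => ⨆ x : X, max (idx s : ℕ∞) (⨅ y : Y, V (T s x y))
        monotone' := fun V W h s => iSup_mono fun x =>
          max_le_max le_rfl (iInf_mono fun y => h _) }
    let R : S → Prop := fun s => ∃ x n, stratPlay T s₁ f x n = s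
    let W : S → ℕ∞ := fun s => if R s then (k : ℕ∞) else ⊤
    have hW : Φ W ≤ W := by
      intro s
      by_cases hs : R s
      · have : W s = k := if_pos hs
        rw [this]
        obtain ⟨x, n, rfl⟩ := hs
        refine iSup_le fun a => max_le (Nat.cast_le (α := ℕ∞).mpr (hf x n)) ?_
        let x' := Function.update x n a
        have e : stratPlay T s₁ f x' n = stratPlay T s₁ f x n :=
          stratPlay_congr_aux T s₁ f _ _ n fun i hi => by
            simp [x', Function.update_of_ne hi.ne]
        have ea : x' n = a := by simp [x']
        refine iInf_le_of_le (f ⟨List.ofFn fun i : Fin (n + 1) => x' i, by simp⟩) ?_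
        refine le_of_eq (if_pos ⟨x', n + 1, ?_⟩)
        simp only [stratPlay]
        rw [e, ea]
      · have : W s = ⊤ := if_neg hs
        rw [this]; exact le_top
    refine ⟨Φ.lfp, ?_, fun s => (congrFun Φ.map_lfp s).symm⟩
    have h1 : Φ.lfp s₁ ≤ W s₁ := Φ.lfp_le hW s₁
    obtain ⟨x⟩ := ‹Nonempty X›
    have h2 : W s₁ = k := if_pos ⟨fun _ => x, 0, rfl⟩
    rw [h2] at h1
    exact ne_top_of_le_ne_top (ENat.natCast_ne_top k) h1
end

section
/- Let S be a type, X and Y nonempty types, T : S → X → Y → S, s₁ ∈ S, and Bad ⊆ S. If there exists a (history-dependent) system strategy f, mapping nonempty finite sequences of elements of X to elements of Y, that is winning from s₁ (i.e., for every infinite sequence x₁, x₂, … over X the play s^1 = s₁, s^{n+1} = T(s^n, x_n, f(x₁,…,x_n)) never visits Bad), then there exists a memoryless policy π : S → X → Y that is winning from s₁ (i.e., for every infinite sequence x₁, x₂, … over X the play s^1 = s₁, s^{n+1} = T(s^n, x_n, π(s^n, x_n)) never visits Bad). -/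
/-- The play induced from initial state `s₁` by a memoryless policy `π : S → X → Y`
and an infinite sequence `x` of environment actions. -/
def memPlay {S X Y : Type*} (T : S → X → Y → S) (π : S → X → Y) (s₁ : S)
    (x : ℕ → X) : ℕ → S
  | 0 => s₁
  | n + 1 => T (memPlay T π s₁ x n) (x n) (π (memPlay T π s₁ x n) (x n))

/-- A play prefix only depends on the corresponding prefix of the environment sequence. -/
theorem stratPlay_congr_prefix {S X Y : Type*} (T : S → X → Y → S) (s₁ : S)
    (f : {l : List X // l ≠ []} → Y) (x z : ℕ → X) (n : ℕ) (h : ∀ i < n, x i = z i) :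
    stratPlay T s₁ f x n = stratPlay T s₁ f z n := by
  induction n with
  | zero => rfl
  | succ n ih =>
    have h1 := ih (fun i hi => h i (by omega))
    have h2 : (fun i : Fin (n + 1) => x i) = fun i : Fin (n + 1) => z i :=
      funext fun i => h i i.2
    simp only [stratPlay, h1, h2, h n (by omega)]

/-- Memoryless determinacy of safety games: if some history-dependent system strategy
is winning from `s₁` (its plays never visit `Bad`), then some memoryless policy
`π : S → X → Y` is winning from `s₁`. -/
theorem safety_game_memoryless_determinacy {S X Y : Type*} [Nonempty X] [Nonempty Y]
    (T : S → X → Y → S) (s₁ : S) (Bad : Set S)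
    (h : ∃ f : {l : List X // l ≠ []} → Y, ∀ x : ℕ → X, ∀ n : ℕ,
        stratPlay T s₁ f x n ∉ Bad) :
    ∃ π : S → X → Y, ∀ x : ℕ → X, ∀ n : ℕ, memPlay T π s₁ x n ∉ Bad := by
  classical
  obtain ⟨f, hf⟩ := h
  have key : ∀ s a, ∃ y, (∃ x n, stratPlay T s₁ f x n = s) →
      ∃ x n, stratPlay T s₁ f x n = T s a y := by
    intro s a
    by_cases hs : ∃ x n, stratPlay T s₁ f x n = s
    · obtain ⟨x, n, hx⟩ := hs
      let z : ℕ → X := fun i => if i < n then x i else a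
      have hz : stratPlay T s₁ f z n = s := by
        rw [← hx]
        exact stratPlay_congr_prefix T s₁ f z x n (fun i hi => by simp [z, hi])
      have hzn : z n = a := by simp [z]
      refine ⟨f ⟨List.ofFn fun i : Fin (n + 1) => z i, by simp⟩, fun _ => ⟨z, n + 1, ?_⟩⟩
      rw [stratPlay, hz, hzn]
    · exact ⟨Classical.arbitrary Y, fun h => absurd h hs⟩
  choose π hπ using key
  refine ⟨π, fun x n => ?_⟩
  have hr : ∃ z m, stratPlay T s₁ f z m = memPlay T π s₁ x n := by
    induction n with
    | zero => exact ⟨x, 0, rfl⟩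
    | succ n ih => exact hπ _ _ ih
  obtain ⟨z, m, hm⟩ := hr
  rw [← hm]
  exact hf z m
end

section
/- Let Q be a finite type, Σ a type, q₀ ∈ Q, δ : Q → Σ → Finset Q a nondeterministic transition function, and Q_F ⊆ Q a set of rejecting states. Define the bookkeeping vectors as functions Q → WithBot ℕ, with initial vector e₀ given by e₀(q₀) = 0 and e₀(q) = ⊥ for q ≠ q₀, and with step function step(s, σ)(q) = t(q) + c(q), where t(q) is the supremum in WithBot ℕ of {s(q') | q ∈ δ(q', σ)} (equal to ⊥ if this set is empty or all its elements are ⊥), and c(q) = 1 if q ∈ Q_F and c(q) = 0 otherwise, with the convention ⊥ + 1 = ⊥. Then for every finite word w = σ₁⋯σ_n over Σ and every q ∈ Q, the vector obtained by folding step over w starting from e₀ satisfies: its value at q equals the supremum in WithBot ℕ, over all runs r = (r_0, r_1, …, r_n) of the automaton on w (i.e., r_0 = q₀ and r_{j} ∈ δ(r_{j−1}, σ_j) for 1 ≤ j ≤ n) with r_n = q, of the number of indices j with 1 ≤ j ≤ n and r_j ∈ Q_F; in particular, this value is ⊥ exactly when no run on w ends in q. Consequently, the maximum over all q ∈ Q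 of the folded vector's value at q equals the supremum over all runs of the automaton on w of the number of rejecting states they visit after the initial position. -/
/-- Initial bookkeeping vector: `0` at the initial state `q₀`, `⊥` elsewhere. -/
def initVec {Q : Type*} [DecidableEq Q] (q₀ : Q) : Q → WithBot ℕ :=
  fun q => if q = q₀ then (0 : ℕ) else ⊥

/-- Bookkeeping step function: `step s σ q = t q + c q`, where
`t q = sup {s q' | q ∈ δ q' σ}` in `WithBot ℕ` (equal to `⊥` if this set is empty or
all its elements are `⊥`), and `c q = 1` if `q ∈ QF` and `c q = 0` otherwise
(with `⊥ + 1 = ⊥`). -/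
def stepVec {Q A : Type*} [Fintype Q] [DecidableEq Q]
    (δ : Q → A → Finset Q) (QF : Set Q) [DecidablePred (· ∈ QF)]
    (s : Q → WithBot ℕ) (σ : A) : Q → WithBot ℕ :=
  fun q =>
    (Finset.univ.filter fun q' : Q => q ∈ δ q' σ).sup s +
      (if q ∈ QF then (1 : WithBot ℕ) else 0)

/-- A run of the nondeterministic automaton `(Q, q₀, δ)` on the finite word `w`:
a sequence `r₀, r₁, …, r_n` (`n = w.length`) with `r₀ = q₀` and
`r_{j+1} ∈ δ (r_j) (w_j)`. -/
def IsRun {Q A : Type*} (δ : Q → A → Finset Q) (q₀ : Q) (w : List A)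
    (r : Fin (w.length + 1) → Q) : Prop :=
  r 0 = q₀ ∧ ∀ j : Fin w.length, r j.succ ∈ δ (r j.castSucc) (w.get j)

instance {Q A : Type*} [DecidableEq Q] (δ : Q → A → Finset Q) (q₀ : Q) (w : List A) :
    DecidablePred (IsRun δ q₀ w) := fun r => by
  unfold IsRun; infer_instance

/-- The co-Büchi count of a run: the number of positions `1 ≤ j ≤ n` at which the run
visits a rejecting state. -/
def runCount {Q A : Type*} (QF : Set Q) [DecidablePred (· ∈ QF)] (w : List A)
    (r : Fin (w.length + 1) → Q) : ℕ :=
  (Finset.univ.filter fun j : Fin w.length => r j.succ ∈ QF).card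

theorem aux_sup_add {Q : Type*} (F : Finset Q) (s : Q → WithBot ℕ) (c b : WithBot ℕ) :
    F.sup s + c ≤ b ↔ ∀ i ∈ F, s i + c ≤ b := by
  classical
  induction F using Finset.induction_on with
  | empty => simp
  | insert x F hx ih =>
    rw [Finset.sup_insert, Finset.forall_mem_insert, ← ih]
    rcases le_total (s x) (F.sup s) with h | h
    · rw [sup_eq_right.2 h]
      exact ⟨fun h' => ⟨(add_le_add_left h c).trans h', h'⟩, fun h' => h'.2⟩
    · rw [sup_eq_left.2 h]
      exact ⟨fun h' => ⟨h', (add_le_add_left h c).trans h'⟩, fun h' => h'.1⟩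

theorem aux_runCount_cons {Q A : Type*} (QF : Set Q) [DecidablePred (· ∈ QF)] (a : A)
    (w : List A) (x : Q) (r : Fin (w.length + 1) → Q) :
    ((runCount QF (a :: w) (Fin.cons x r : Fin (w.length + 1 + 1) → Q) : ℕ) : WithBot ℕ) =
      (if r 0 ∈ QF then (1 : WithBot ℕ) else 0) + (runCount QF w r : WithBot ℕ) := by
  have h : runCount QF (a :: w) (Fin.cons x r : Fin (w.length + 1 + 1) → Q) =
      (if r 0 ∈ QF then 1 else 0) + runCount QF w r := by
    unfold runCount
    rw [Finset.card_filter, Finset.card_filter]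
    exact Fin.sum_univ_succ (n := w.length) _
  rw [h]
  split_ifs <;> simp

theorem aux_isRun_cons {Q A : Type*} (δ : Q → A → Finset Q) (x : Q) (a : A)
    (w : List A) (y : Q) (r : Fin (w.length + 1) → Q) :
    IsRun δ x (a :: w) (Fin.cons y r : Fin (w.length + 1 + 1) → Q) ↔
      y = x ∧ r 0 ∈ δ y a ∧ IsRun δ (r 0) w r := by
  unfold IsRun
  have := Fin.forall_fin_succ (n := w.length) (P := fun j =>
    (Fin.cons y r : Fin (w.length + 1 + 1) → Q) j.succ ∈
      δ ((Fin.cons y r : Fin (w.length + 1 + 1) → Q) j.castSucc) ((a :: w).get j))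
  refine and_congr Iff.rfl (this.trans (and_congr Iff.rfl ?_))
  simp only [true_and]
  exact Iff.rfl

theorem aux_fold {Q A : Type*} [Fintype Q] [DecidableEq Q]
    (δ : Q → A → Finset Q) (QF : Set Q) [DecidablePred (· ∈ QF)]
    (w : List A) (s : Q → WithBot ℕ) (q : Q) (b : WithBot ℕ) :
    w.foldl (stepVec δ QF) s q ≤ b ↔
      ∀ r : Fin (w.length + 1) → Q, IsRun δ (r 0) w r → r (Fin.last w.length) = q →
        s (r 0) + (runCount QF w r : WithBot ℕ) ≤ b := by
  induction w generalizing s with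
  | nil =>
    constructor
    · rintro h r - hr
      have hr' : r 0 = q := hr
      simpa [runCount, hr'] using h
    · intro h
      simpa [runCount] using h (fun _ => q) ⟨rfl, fun j => j.elim0⟩ rfl
  | cons a w ih =>
    rw [List.foldl_cons, ih]
    have key : ∀ r : Fin (w.length + 1) → Q,
        stepVec δ QF s a (r 0) + (runCount QF w r : WithBot ℕ) ≤ b ↔
        ∀ x, r 0 ∈ δ x a → s x +
          ((runCount QF (a :: w) (Fin.cons x r : Fin (w.length + 1 + 1) → Q) : ℕ) :
            WithBot ℕ) ≤ b := by
      intro r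
      unfold stepVec
      rw [add_assoc, aux_sup_add]
      simp only [aux_runCount_cons, Finset.mem_filter, Finset.mem_univ, true_and]
    constructor
    · intro h r' hr hl
      obtain ⟨x, r, rfl⟩ : ∃ (x : Q) (r : Fin (w.length + 1) → Q),
          r' = (Fin.cons x r : Fin (w.length + 1 + 1) → Q) :=
        ⟨r' 0, fun j => r' (Fin.succ j), (Fin.cons_self_tail (n := w.length + 1) r').symm⟩
      obtain ⟨-, h1, h2⟩ := (aux_isRun_cons δ x a w x r).1 hr
      exact (key r).1 (h r h2 hl) x h1
    · intro h r hr hl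
      rw [key]
      intro x hx
      exact h (Fin.cons x r : Fin (w.length + 1 + 1) → Q)
        ((aux_isRun_cons δ x a w x r).2 ⟨rfl, hx, hr⟩) hl

/-- Correctness of the bookkeeping construction: after folding the step function over
a finite word `w` from the initial vector, the value at each automaton state `q` is
the supremum (in `WithBot ℕ`) of the co-Büchi counts of the runs on `w` ending in
`q`; in particular it is `⊥` exactly when no run on `w` ends in `q`. Consequently,
the maximum over all `q` of the folded vector equals the supremum over all runs on
`w` of the number of rejecting states they visit after the initial position. -/
theorem bookkeeping_fold_eq_sup_runCount {Q A : Type*} [Fintype Q] [DecidableEq Q]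
    (q₀ : Q) (δ : Q → A → Finset Q) (QF : Set Q) [DecidablePred (· ∈ QF)]
    (w : List A) :
    (∀ q : Q,
      (w.foldl (stepVec δ QF) (initVec q₀)) q =
        (Finset.univ.filter fun r : Fin (w.length + 1) → Q =>
            IsRun δ q₀ w r ∧ r (Fin.last w.length) = q).sup
          (fun r => (runCount QF w r : WithBot ℕ)) ∧
      ((w.foldl (stepVec δ QF) (initVec q₀)) q = ⊥ ↔
        ¬ ∃ r : Fin (w.length + 1) → Q,
            IsRun δ q₀ w r ∧ r (Fin.last w.length) = q)) ∧
    Finset.univ.sup (fun q : Q => (w.foldl (stepVec δ QF) (initVec q₀)) q) =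
      (Finset.univ.filter fun r : Fin (w.length + 1) → Q => IsRun δ q₀ w r).sup
        (fun r => (runCount QF w r : WithBot ℕ)) := by
  have main : ∀ (q : Q) (b : WithBot ℕ), w.foldl (stepVec δ QF) (initVec q₀) q ≤ b ↔
      ∀ r : Fin (w.length + 1) → Q, IsRun δ q₀ w r → r (Fin.last w.length) = q →
        (runCount QF w r : WithBot ℕ) ≤ b := by
    intro q b
    rw [aux_fold]
    constructor
    · intro h r hr hl
      have h0 := hr.1
      have := h r (by rw [h0]; exact hr) hl
      simpa [initVec, h0] using this
    · intro h r hr hl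
      by_cases h0 : r 0 = q₀
      · have := h r (by rw [← h0]; exact hr) hl
        simpa [initVec, h0] using this
      · simp [initVec, h0]
  refine ⟨fun q => ⟨?_, ?_⟩, ?_⟩
  · refine eq_of_forall_ge_iff fun b => ?_
    rw [main, Finset.sup_le_iff]
    simp only [Finset.mem_filter, Finset.mem_univ, true_and, and_imp]
  · rw [← le_bot_iff, main]
    constructor
    · rintro h ⟨r, hr, hl⟩
      exact WithBot.coe_ne_bot (le_bot_iff.1 (h r hr hl))
    · intro h r hr hl
      exact absurd ⟨r, hr, hl⟩ h
  · refine eq_of_forall_ge_iff fun b => ?_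
    rw [Finset.sup_le_iff, Finset.sup_le_iff]
    simp only [Finset.mem_filter, Finset.mem_univ, true_and, main, forall_const]
    exact ⟨fun h r hr => h _ r hr rfl, fun h q r hr _ => h r hr⟩
end

section
/- Let Q be a finite type, Σ a type, q₀ ∈ Q, δ : Q → Σ → Finset Q, Q_F ⊆ Q, and k ∈ ℕ. Let step be the bookkeeping step function on vectors Q → WithBot ℕ (step(s, σ)(q) = t(q) + c(q), where t(q) = sup{s(q') | q ∈ δ(q', σ)} in WithBot ℕ, c(q) = 1 if q ∈ Q_F else 0, and ⊥ + 1 = ⊥), and let step_k be its k-capped version, step_k(s, σ)(q) = min(k, step(s, σ)(q)) in WithBot ℕ. Let e₀ be the initial vector with e₀(q₀) = 0 and e₀(q) = ⊥ otherwise. Then for every finite word w over Σ and every q ∈ Q, the result of folding step_k over w from e₀, evaluated at q, equals min(k, v(q)), where v is the result of folding the uncapped step over w from e₀. -/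
/-- The `k`-capped bookkeeping step function: every component is truncated at `k`
after each step. -/
def stepVecCapped {Q A : Type*} [Fintype Q] [DecidableEq Q]
    (δ : Q → A → Finset Q) (QF : Set Q) [DecidablePred (· ∈ QF)] (k : ℕ)
    (s : Q → WithBot ℕ) (σ : A) : Q → WithBot ℕ :=
  fun q => min (k : WithBot ℕ) (stepVec δ QF s σ q)

theorem cap_add_aux (k : ℕ) (x c : WithBot ℕ) (hc : 0 ≤ c) :
    min (k : WithBot ℕ) (min (k : WithBot ℕ) x + c) = min (k : WithBot ℕ) (x + c) := by
  rcases le_total x (k : WithBot ℕ) with h | h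
  · rw [min_eq_right h]
  · rw [min_eq_left h, min_eq_left (le_add_of_nonneg_right hc),
      min_eq_left (h.trans (le_add_of_nonneg_right hc))]

/-- Capping is sound: folding the `k`-capped step over a word from the initial
vector agrees, at every automaton state, with the `k`-truncation of the fold of the
uncapped step. -/
theorem foldl_stepVecCapped_eq_min {Q A : Type*} [Fintype Q] [DecidableEq Q]
    (q₀ : Q) (δ : Q → A → Finset Q) (QF : Set Q) [DecidablePred (· ∈ QF)] (k : ℕ)
    (w : List A) (q : Q) :
    (w.foldl (stepVecCapped δ QF k) (initVec q₀)) q =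
      min (k : WithBot ℕ) ((w.foldl (stepVec δ QF) (initVec q₀)) q) := by
  induction w using List.reverseRecOn generalizing q with
  | nil =>
    simp only [List.foldl_nil, initVec]
    split_ifs
    · symm
      apply min_eq_right
      exact_mod_cast Nat.zero_le k
    · simp
  | append_singleton w a ih =>
    simp only [List.foldl_append, List.foldl_cons, List.foldl_nil]
    rw [funext ih]
    simp only [stepVecCapped, stepVec]
    rw [← cap_add_aux k (Finset.sup _ (List.foldl _ _ w)) _ (by split_ifs <;> simp)]
    congr 2
    exact (Finset.sup_inf_distrib_left _ _ _).symm
end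

section
/- Let Q be a finite type, X and Y nonempty types, q₀ ∈ Q, δ : Q → (X × Y) → Finset Q with δ(q, σ) nonempty for all q and σ, Q_F ⊆ Q, and k ≥ 1 a natural number. Then the following are equivalent: (i) there exists a strategy f mapping nonempty finite sequences of elements of X to elements of Y such that for every infinite sequence x₁, x₂, … over X, every run of the automaton on every finite prefix of the induced play (x₁, f(x₁)), (x₂, f(x₁,x₂)), … visits rejecting states at most k − 1 times after the initial position; (ii) there exists a memoryless policy π winning from the initial state in the safety game whose states are vectors s : Q → WithBot ℕ, whose environment actions are X and system actions are Y, whose transition maps (s, x, y) to step_k(s, (x,y)) (the k-capped bookkeeping step), whose initial state is the vector e₀ with e₀(q₀) = 0 and e₀(q) = ⊥ otherwise, and whose losing states are {s | s(q) = k for some q ∈ Q}. -/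
/-- The length-`n` prefix of the play over the alphabet `X × Y` induced by a
history-dependent system strategy `f` and an infinite environment sequence `x`:
`(x₀, f(x₀)), (x₁, f(x₀,x₁)), …, (x_{n-1}, f(x₀,…,x_{n-1}))`. -/
def playWord {X Y : Type*} (f : {l : List X // l ≠ []} → Y) (x : ℕ → X)
    (n : ℕ) : List (X × Y) :=
  List.ofFn fun i : Fin n =>
    (x i, f ⟨List.ofFn fun j : Fin (i + 1) => x j, by simp⟩)

/-- The play of the `k`-capped safety game induced by a memoryless policy
`π : (Q → WithBot ℕ) → X → Y` and an infinite environment sequence `x`, starting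
from the initial bookkeeping vector. -/
def gamePlay {Q X Y : Type*} [Fintype Q] [DecidableEq Q]
    (δ : Q → X × Y → Finset Q) (QF : Set Q) [DecidablePred (· ∈ QF)] (k : ℕ)
    (q₀ : Q) (π : (Q → WithBot ℕ) → X → Y) (x : ℕ → X) : ℕ → (Q → WithBot ℕ)
  | 0 => initVec q₀
  | n + 1 =>
      stepVecCapped δ QF k (gamePlay δ QF k q₀ π x n)
        (x n, π (gamePlay δ QF k q₀ π x n) (x n))

/-- Iterated capped step along an infinite word. -/
def vecSeq {Q A : Type*} [Fintype Q] [DecidableEq Q]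
    (δ : Q → A → Finset Q) (QF : Set Q) [DecidablePred (· ∈ QF)] (k : ℕ)
    (q₀ : Q) (σ : ℕ → A) : ℕ → (Q → WithBot ℕ)
  | 0 => initVec q₀
  | n + 1 => stepVecCapped δ QF k (vecSeq δ QF k q₀ σ n) (σ n)

/-- Run on the length `n` prefix, as a function on all naturals. -/
def RunTo {Q A : Type*} (δ : Q → A → Finset Q) (q₀ : Q) (σ : ℕ → A) (n : ℕ)
    (ρ : ℕ → Q) : Prop :=
  ρ 0 = q₀ ∧ ∀ j < n, ρ (j + 1) ∈ δ (ρ j) (σ j)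

/-- Count of rejecting visits, recursively. -/
def cnt {Q : Type*} (QF : Set Q) [DecidablePred (· ∈ QF)] (ρ : ℕ → Q) : ℕ → ℕ
  | 0 => 0
  | n + 1 => cnt QF ρ n + if ρ (n + 1) ∈ QF then 1 else 0

section
variable {Q A : Type*}

theorem cnt_congr (QF : Set Q) [DecidablePred (· ∈ QF)] (ρ ρ' : ℕ → Q) (n : ℕ)
    (h : ∀ j ≤ n, ρ j = ρ' j) : cnt QF ρ n = cnt QF ρ' n := by
  induction n with
  | zero => rfl
  | succ n ih =>
    simp only [cnt]
    rw [ih (fun j hj => h j (by omega)), h (n + 1) le_rfl]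

theorem cnt_eq_card (QF : Set Q) [DecidablePred (· ∈ QF)] (ρ : ℕ → Q) (n : ℕ) :
    (Finset.univ.filter fun j : Fin n => ρ (j + 1) ∈ QF).card = cnt QF ρ n := by
  induction n with
  | zero => simp [cnt]
  | succ n ih =>
    rw [cnt, ← ih, Finset.card_filter, Finset.card_filter, Fin.sum_univ_castSucc]
    simp

theorem vecSeq_congr [Fintype Q] [DecidableEq Q] (δ : Q → A → Finset Q) (QF : Set Q)
    [DecidablePred (· ∈ QF)] (k : ℕ) (q₀ : Q) (σ σ' : ℕ → A) (n : ℕ)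
    (h : ∀ j < n, σ j = σ' j) : vecSeq δ QF k q₀ σ n = vecSeq δ QF k q₀ σ' n := by
  induction n with
  | zero => rfl
  | succ n ih =>
    simp only [vecSeq]
    rw [ih (fun j hj => h j (by omega)), h n (by omega)]

theorem vecSeq_le [Fintype Q] [DecidableEq Q] (δ : Q → A → Finset Q) (QF : Set Q)
    [DecidablePred (· ∈ QF)] (k : ℕ) (q₀ : Q) (σ : ℕ → A) (n : ℕ) (q : Q) :
    vecSeq δ QF k q₀ σ n q ≤ (k : WithBot ℕ) := by
  cases n with
  | zero =>
    simp only [vecSeq, initVec]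
    split_ifs
    · exact_mod_cast Nat.zero_le k
    · exact bot_le
  | succ n => exact min_le_left _ _

theorem le_vecSeq [Fintype Q] [DecidableEq Q] (δ : Q → A → Finset Q) (QF : Set Q)
    [DecidablePred (· ∈ QF)] (k : ℕ) (q₀ : Q) (σ : ℕ → A) (ρ : ℕ → Q) (n : ℕ)
    (h : RunTo δ q₀ σ n ρ) :
    ((min k (cnt QF ρ n) : ℕ) : WithBot ℕ) ≤ vecSeq δ QF k q₀ σ n (ρ n) := by
  induction n with
  | zero => simp [cnt, vecSeq, initVec, h.1]
  | succ n ih =>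
    have h1 := ih ⟨h.1, fun j hj => h.2 j (by omega)⟩
    simp only [vecSeq, stepVecCapped, stepVec]
    refine le_min (by exact_mod_cast min_le_left _ _) ?_
    have h2 : vecSeq δ QF k q₀ σ n (ρ n) ≤
        (Finset.univ.filter fun q' : Q => ρ (n + 1) ∈ δ q' (σ n)).sup
          (vecSeq δ QF k q₀ σ n) :=
      Finset.le_sup (f := vecSeq δ QF k q₀ σ n) (by simpa using h.2 n (by omega))
    refine le_trans ?_ (add_le_add_left (h1.trans h2) _)
    simp only [cnt]
    split_ifs
    · have : min k (cnt QF ρ n + 1) ≤ min k (cnt QF ρ n) + 1 := by omega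
      exact_mod_cast this
    · simp

theorem exists_run [Fintype Q] [DecidableEq Q] (δ : Q → A → Finset Q) (QF : Set Q)
    [DecidablePred (· ∈ QF)] (k : ℕ) (q₀ : Q) (σ : ℕ → A) (n : ℕ) :
    ∀ (q : Q) (m : ℕ), (m : WithBot ℕ) ≤ vecSeq δ QF k q₀ σ n q →
      ∃ ρ, RunTo δ q₀ σ n ρ ∧ ρ n = q ∧ m ≤ cnt QF ρ n := by
  induction n with
  | zero =>
    intro q m h
    simp only [vecSeq, initVec] at h
    split_ifs at h with hq
    · exact ⟨fun _ => q₀, ⟨rfl, by simp⟩, hq.symm, by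
        have : m ≤ 0 := by exact_mod_cast h
        simpa [cnt] using this⟩
    · simp at h
  | succ n ih =>
    intro q m h
    simp only [vecSeq, stepVecCapped, stepVec] at h
    have h := h.trans (min_le_right _ _)
    set S := Finset.univ.filter fun q' : Q => q ∈ δ q' (σ n) with hS
    have hne : S.Nonempty := by
      by_contra hc
      rw [Finset.not_nonempty_iff_eq_empty] at hc
      rw [hc] at h
      simp at h
    obtain ⟨p, hp, hsup⟩ := Finset.exists_mem_eq_sup S hne (vecSeq δ QF k q₀ σ n)
    rw [hsup] at h
    have hpδ : q ∈ δ p (σ n) := by simpa [hS] using hp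
    obtain ⟨v, hv⟩ : ∃ v : ℕ, vecSeq δ QF k q₀ σ n p = (v : WithBot ℕ) := by
      cases hc : vecSeq δ QF k q₀ σ n p with
      | bot => rw [hc] at h; simp at h
      | coe v => exact ⟨v, rfl⟩
    obtain ⟨ρ, hρ, hρn, hc⟩ := ih p v hv.ge
    rw [hv] at h
    have hm : m ≤ v + if q ∈ QF then 1 else 0 := by
      split_ifs at h ⊢ <;> exact_mod_cast h
    refine ⟨fun j => if j ≤ n then ρ j else q, ⟨by simpa using hρ.1, ?_⟩, by simp, ?_⟩
    · intro j hj
      rcases Nat.lt_succ_iff_lt_or_eq.mp hj with hj | rfl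
      · have : j ≤ n := hj.le
        have h' : j + 1 ≤ n := hj
        simpa [this, h'] using hρ.2 j hj
      · simpa [hρn] using hpδ
    · rw [cnt, cnt_congr QF _ ρ n (fun j hj => by simp [hj])]
      simp only [show ¬ (n + 1 ≤ n) by omega, if_false]
      omega

theorem safe_iff [Fintype Q] [DecidableEq Q] (δ : Q → A → Finset Q) (QF : Set Q)
    [DecidablePred (· ∈ QF)] (k : ℕ) (hk : 1 ≤ k) (q₀ : Q) (σ : ℕ → A) (w : List A)
    (n : ℕ) (hn : w.length = n) (hw : ∀ j : Fin w.length, w.get j = σ j) :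
    (∀ r : Fin (w.length + 1) → Q, IsRun δ q₀ w r → runCount QF w r ≤ k - 1) ↔
      ¬ ∃ q, vecSeq δ QF k q₀ σ n q = (k : WithBot ℕ) := by
  subst hn
  constructor
  · rintro h ⟨q, hq⟩
    obtain ⟨ρ, hρ, -, hc⟩ := exists_run δ QF k q₀ σ _ q k hq.ge
    have h1 := h (fun j => ρ j) ⟨hρ.1, fun j => by
      rw [hw]; simpa using hρ.2 j j.2⟩
    have h2 : runCount QF w (fun j => ρ j) = cnt QF ρ w.length := by
      rw [← cnt_eq_card]; simp [runCount]
    omega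
  · intro h r hr
    by_contra hc
    apply h
    let ρ : ℕ → Q := fun j => if hj : j < w.length + 1 then r ⟨j, hj⟩ else q₀
    have hρ : RunTo δ q₀ σ w.length ρ := by
      refine ⟨by simpa [ρ] using hr.1, fun j hj => ?_⟩
      have h1 := hr.2 ⟨j, hj⟩
      rw [hw] at h1
      have h2 : j ≤ w.length := by omega
      simpa [ρ, hj, h2] using h1
    have h2 : runCount QF w r = cnt QF ρ w.length := by
      rw [← cnt_eq_card]
      simp [runCount, ρ, Fin.succ]
    refine ⟨ρ w.length, le_antisymm (vecSeq_le _ _ _ _ _ _ _) ?_⟩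
    have h3 := le_vecSeq δ QF k q₀ σ ρ _ hρ
    rwa [min_eq_left (by omega)] at h3

end

/-- The infinite play of a strategy. -/
def playSeq {X Y : Type*} (f : {l : List X // l ≠ []} → Y) (x : ℕ → X) (i : ℕ) : X × Y :=
  (x i, f ⟨List.ofFn fun j : Fin (i + 1) => x j, by simp⟩)

theorem playSeq_congr {X Y : Type*} (f : {l : List X // l ≠ []} → Y) (x x' : ℕ → X) (i : ℕ)
    (h : ∀ j ≤ i, x j = x' j) : playSeq f x i = playSeq f x' i := by
  have : (fun j : Fin (i + 1) => x j) = fun j : Fin (i + 1) => x' j :=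
    funext fun j => h j (by omega)
  simp only [playSeq, this, h i le_rfl]

theorem gamePlay_congr {Q X Y : Type*} [Fintype Q] [DecidableEq Q]
    (δ : Q → X × Y → Finset Q) (QF : Set Q) [DecidablePred (· ∈ QF)] (k : ℕ)
    (q₀ : Q) (π : (Q → WithBot ℕ) → X → Y) (x x' : ℕ → X) (n : ℕ)
    (h : ∀ j < n, x j = x' j) :
    gamePlay δ QF k q₀ π x n = gamePlay δ QF k q₀ π x' n := by
  induction n with
  | zero => rfl
  | succ n ih =>
    simp only [gamePlay]
    rw [ih (fun j hj => h j (by omega)), h n (by omega)]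

/-- Bounded synthesis as a safety game: there is a history-dependent system strategy
such that every run of the universal co-Büchi automaton on every finite prefix of
every induced play visits rejecting states at most `k - 1` times (after the initial
position) iff there is a memoryless policy winning from the initial vector in the
`k`-capped safety game whose losing states are the vectors with some component equal
to `k`. -/
theorem bounded_synthesis_iff_safety_game {Q X Y : Type*} [Fintype Q] [DecidableEq Q]
    [Nonempty X] [Nonempty Y]
    (q₀ : Q) (δ : Q → X × Y → Finset Q) (hδ : ∀ (q : Q) (σ : X × Y), (δ q σ).Nonempty)
    (QF : Set Q) [DecidablePred (· ∈ QF)]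
    (k : ℕ) (hk : 1 ≤ k) :
    (∃ f : {l : List X // l ≠ []} → Y, ∀ x : ℕ → X, ∀ n : ℕ,
        ∀ r : Fin ((playWord f x n).length + 1) → Q,
          IsRun δ q₀ (playWord f x n) r → runCount QF (playWord f x n) r ≤ k - 1) ↔
    (∃ π : (Q → WithBot ℕ) → X → Y, ∀ x : ℕ → X, ∀ n : ℕ,
        ¬ ∃ q : Q, gamePlay δ QF k q₀ π x n q = (k : WithBot ℕ)) := by
  classical
  have key : ∀ (f : {l : List X // l ≠ []} → Y) (x : ℕ → X) (n : ℕ),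
      (∀ r : Fin ((playWord f x n).length + 1) → Q,
          IsRun δ q₀ (playWord f x n) r → runCount QF (playWord f x n) r ≤ k - 1) ↔
        ¬ ∃ q, vecSeq δ QF k q₀ (playSeq f x) n q = (k : WithBot ℕ) := fun f x n =>
    safe_iff δ QF k hk q₀ (playSeq f x) (playWord f x n) n (by simp [playWord])
      (fun j => by
        have h : (playWord f x n).get j = playSeq f x j := by
          rw [List.get_eq_getElem]; exact List.getElem_ofFn _
        exact h)
  simp only [key]
  constructor
  · rintro ⟨f, hf⟩
    let R : (Q → WithBot ℕ) → Prop := fun s => ∃ x n, s = vecSeq δ QF k q₀ (playSeq f x) n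
    have hR : ∀ s, R s → ∀ x' : X, ∃ y : Y, R (stepVecCapped δ QF k s (x', y)) := by
      rintro s ⟨x, n, rfl⟩ x'
      refine ⟨(playSeq f (Function.update x n x') n).2, Function.update x n x', n + 1, ?_⟩
      rw [vecSeq]
      congr 1
      · refine vecSeq_congr _ _ _ _ _ _ _ fun j hj => playSeq_congr _ _ _ _ fun i hi => ?_
        rw [Function.update_of_ne (by omega)]
      · simp [playSeq]
    let π : (Q → WithBot ℕ) → X → Y := fun s x' =>
      if h : R s then (hR s h x').choose else Classical.arbitrary Y
    refine ⟨π, fun x n => ?_⟩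
    have hx : R (gamePlay δ QF k q₀ π x n) := by
      induction n with
      | zero => exact ⟨x, 0, rfl⟩
      | succ n ih =>
        have := (hR _ ih (x n)).choose_spec
        rw [gamePlay]
        simp only [π, dif_pos ih]
        exact this
    obtain ⟨x₁, n₁, h₁⟩ := hx
    rw [h₁]
    exact hf x₁ n₁
  · rintro ⟨π, hπ⟩
    let f : {l : List X // l ≠ []} → Y := fun l =>
      let z : ℕ → X := fun i => l.1.getD i (Classical.arbitrary X)
      π (gamePlay δ QF k q₀ π z (l.1.length - 1)) (z (l.1.length - 1))
    refine ⟨f, fun x n => ?_⟩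
    have hx : vecSeq δ QF k q₀ (playSeq f x) n = gamePlay δ QF k q₀ π x n := by
      induction n with
      | zero => rfl
      | succ n ih =>
        rw [vecSeq, gamePlay, ih]
        congr 1
        simp only [playSeq, f, List.length_ofFn, Nat.add_sub_cancel]
        have hz : ∀ i ≤ n, (List.ofFn fun j : Fin (n + 1) => x j).getD i
            (Classical.arbitrary X) = x i := by
          intro i hi
          rw [List.getD_eq_getElem _ _ (by simp only [List.length_ofFn]; omega)]
          rw [List.getElem_ofFn]
        rw [hz n le_rfl, gamePlay_congr δ QF k q₀ π _ x n (fun j hj => hz j hj.le)]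
    rw [hx]
    exact hπ x n
end
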